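/- Let I ⊆ ℝ be a nondegenerate interval, n ≥ 2, let ω be an n-dimensional positive Chebyshev system over I, and let (t_1,…,t_n) ∈ ℝ₊ⁿ. If, for all pairs (k,i) ∈ {1,…,n−1} × {1,…,n−1}, the function f : I → ℝ is ((t_i𝟏_k, t_{i+1}𝟏_{n−k}), ω)-convex on I, then f is ((t_1,…,t_n), ω)-convex on I. -/

import Mathlib

/-- `Phi ω x` is the determinant `det(ωᵢ(xⱼ))` of an `n`-tuple of functions
evaluated at an `n`-tuple of points. -/
noncomputable def Phi {n : ℕ} (ω : Fin n → ℝ → ℝ) (x : Fin n → ℝ) : ℝ :=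
  (Matrix.of fun i j => ω i (x j)).det

/-- `ω` is an `n`-dimensional positive Chebyshev system over `H`:
`Phi ω` is positive on all strictly increasing `n`-tuples of elements of `H`. -/
def IsPosChebyshev {n : ℕ} (ω : Fin n → ℝ → ℝ) (H : Set ℝ) : Prop :=
  ∀ x : Fin n → ℝ, StrictMono x → (∀ j, x j ∈ H) → 0 < Phi ω x

/-- The partial sum `t₁ + ⋯ + tⱼ` (empty for `j = 0`, everything for `j = n`). -/
noncomputable def psum {n : ℕ} (t : Fin n → ℝ) (j : Fin (n + 1)) : ℝ :=
  ∑ i ∈ Finset.univ.filter (fun i : Fin n => (i : ℕ) < (j : ℕ)), t i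

/-- `f` is `(t,ω)`-convex on `J`:
`Φ_{(ω,f)}(x, x+t₁h, x+(t₁+t₂)h, …, x+(t₁+⋯+tₙ)h) ≥ 0`
for all `x ∈ J` and `h > 0` with `x+(t₁+⋯+tₙ)h ∈ J`. -/
def TOmegaConvexOn {n : ℕ} (ω : Fin n → ℝ → ℝ) (t : Fin n → ℝ) (J : Set ℝ) (f : ℝ → ℝ) : Prop :=
  ∀ x ∈ J, ∀ h : ℝ, 0 < h → x + psum t (Fin.last n) * h ∈ J →
    0 ≤ Phi (Fin.snoc ω f) (fun j => x + psum t j * h)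

/-!
Split each step `tᵢ h` of a `t`-grid into `m = n - 1` equal parts. Any `n + 1` consecutive points
of the refined grid span `n = m + 1` small steps, hence meet at most two neighbouring values
`tᵢ, tᵢ₊₁`, so the corresponding determinant is nonnegative by one of the two-block convexity
assumptions. Nonnegativity then passes from consecutive to arbitrary points of the refined grid by
filling gaps: for `z₀ < ⋯ < zₙ₊₁`, if the determinants of `(ω, f)` without `z₀` and without `zₙ₊₁`
are nonnegative, so is the one without any `zⱼ`. Indeed `f` may be assumed to vanish at
`z₁, …, zₙ`; then the two given determinants fix the signs of `f zₙ₊₁` and `(-1)ⁿ f z₀`, which make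
every term of the Laplace expansion nonnegative.
-/

section Determinants

variable {n : ℕ} (ω : Fin n → ℝ → ℝ)

lemma Phi_snoc_eq_sum (f : ℝ → ℝ) (x : Fin (n + 1) → ℝ) :
    Phi (Fin.snoc ω f) x =
      ∑ j : Fin (n + 1), (-1) ^ (n + (j : ℕ)) * f (x j) * Phi ω (j.removeNth x) := by
  unfold Phi
  rw [Matrix.det_succ_row _ (Fin.last n)]
  refine Finset.sum_congr rfl fun j _ => ?_
  congr 2
  · simp
  · ext i k
    simp [Fin.removeNth]

lemma Phi_snoc_eq_of_forall_ne {f : ℝ → ℝ} {x : Fin (n + 1) → ℝ} (k : Fin (n + 1))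
    (hf : ∀ j ≠ k, f (x j) = 0) :
    Phi (Fin.snoc ω f) x = (-1) ^ (n + (k : ℕ)) * f (x k) * Phi ω (k.removeNth x) := by
  rw [Phi_snoc_eq_sum, Finset.sum_eq_single k (fun j _ hj => by rw [hf j hj]; ring) (by simp)]

lemma Phi_snoc_sub_sum (f : ℝ → ℝ) (c : Fin n → ℝ) (x : Fin (n + 1) → ℝ) :
    Phi (Fin.snoc ω fun u => f u - ∑ i, c i * ω i u) x = Phi (Fin.snoc ω f) x := by
  let A : Matrix (Fin (n + 1)) (Fin (n + 1)) ℝ :=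
    Matrix.of fun i j => (Fin.snoc ω f : Fin (n + 1) → ℝ → ℝ) i (x j)
  let b : Fin (n + 1) → ℝ := Fin.snoc (fun i => -c i) 1
  have hrow : (Matrix.of fun i j =>
      (Fin.snoc ω fun u => f u - ∑ i, c i * ω i u : Fin (n + 1) → ℝ → ℝ) i (x j)) =
      A.updateRow (Fin.last n) (∑ k, b k • A k) := by
    ext i j
    cases i using Fin.lastCases with
    | last => simp [A, b, Fin.sum_univ_castSucc, sub_eq_neg_add]
    | cast i => simp [A]
  unfold Phi
  rw [hrow, Matrix.det_updateRow_sum]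
  simp [A, b]

variable {ω}

lemma exists_sum_mul_eq_of_Phi_ne_zero {x : Fin n → ℝ} (hx : Phi ω x ≠ 0) (v : Fin n → ℝ) :
    ∃ c : Fin n → ℝ, ∀ j, ∑ i, c i * ω i (x j) = v j := by
  have hA : IsUnit (Matrix.of fun i j => ω i (x j)) :=
    (Matrix.isUnit_iff_isUnit_det _).2 (isUnit_iff_ne_zero.2 hx)
  obtain ⟨c, hc⟩ := Matrix.vecMul_surjective_iff_isUnit.2 hA v
  exact ⟨c, congrFun hc⟩

lemma IsPosChebyshev.Phi_snoc_removeNth_nonneg_of_eq_zero {I : Set ℝ} (hω : IsPosChebyshev ω I)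
    {g : ℝ → ℝ} {z : Fin (n + 2) → ℝ} (hz : StrictMono z) (hzI : ∀ j, z j ∈ I)
    (hg : ∀ k, k ≠ 0 → k ≠ Fin.last (n + 1) → g (z k) = 0)
    (htail : 0 ≤ Phi (Fin.snoc ω g) (Fin.tail z)) (hinit : 0 ≤ Phi (Fin.snoc ω g) (Fin.init z))
    {j : Fin (n + 2)} (hj0 : j ≠ 0) (hjl : j ≠ Fin.last (n + 1)) :
    0 ≤ Phi (Fin.snoc ω g) (j.removeNth z) := by
  have hpos {e : Fin n → Fin (n + 2)} (he : StrictMono e) : 0 < Phi ω (z ∘ e) :=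
    hω _ (hz.comp he) fun _ => hzI _
  have hlast : 0 ≤ g (z (Fin.last (n + 1))) := by
    rw [Phi_snoc_eq_of_forall_ne ω (x := Fin.tail z) (Fin.last n) fun b hb =>
      hg _ (Fin.succ_ne_zero b) fun h => hb (Fin.succ_injective _ h)] at htail
    have := nonneg_of_mul_nonneg_left htail
      (hpos (Fin.strictMono_succ.comp (Fin.strictMono_succAbove (Fin.last n))))
    simpa [Even.neg_one_pow (Even.add_self n), Fin.tail] using this
  have hfirst : 0 ≤ (-1) ^ n * g (z 0) := by
    rw [Phi_snoc_eq_of_forall_ne ω (x := Fin.init z) 0 fun b hb =>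
      hg _ (fun h => hb (Fin.castSucc_injective _ h)) (Fin.castSucc_lt_last b).ne] at hinit
    exact nonneg_of_mul_nonneg_left hinit
      (hpos (Fin.strictMono_castSucc.comp (Fin.strictMono_succAbove 0)))
  rw [Phi_snoc_eq_sum]
  refine Finset.sum_nonneg fun b _ => mul_nonneg ?_
    (hpos ((Fin.strictMono_succAbove j).comp (Fin.strictMono_succAbove b))).le
  rw [Fin.removeNth_apply]
  rcases eq_or_ne b 0 with rfl | hb0
  · simpa [Fin.succAbove_ne_zero_zero hj0] using hfirst
  rcases eq_or_ne b (Fin.last n) with rfl | hbl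
  · simpa [Fin.succAbove_ne_last_last hjl, Even.neg_one_pow (Even.add_self n)] using hlast
  · rw [hg _ (Fin.succAbove_ne_zero hj0 hb0) (Fin.succAbove_ne_last hjl hbl), mul_zero]

lemma IsPosChebyshev.Phi_snoc_removeNth_nonneg {I : Set ℝ} (hω : IsPosChebyshev ω I)
    {f : ℝ → ℝ} {z : Fin (n + 2) → ℝ} (hz : StrictMono z) (hzI : ∀ j, z j ∈ I)
    (htail : 0 ≤ Phi (Fin.snoc ω f) (Fin.tail z)) (hinit : 0 ≤ Phi (Fin.snoc ω f) (Fin.init z))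
    (j : Fin (n + 2)) : 0 ≤ Phi (Fin.snoc ω f) (j.removeNth z) := by
  rcases eq_or_ne j 0 with rfl | hj0
  · rwa [Fin.removeNth_zero]
  rcases eq_or_ne j (Fin.last (n + 1)) with rfl | hjl
  · rwa [Fin.removeNth_last]
  have hinterior : Phi ω (fun i => z i.castSucc.succ) ≠ 0 :=
    (hω _ (hz.comp (Fin.strictMono_succ.comp Fin.strictMono_castSucc)) fun _ => hzI _).ne'
  obtain ⟨c, hc⟩ := exists_sum_mul_eq_of_Phi_ne_zero hinterior fun i => f (z i.castSucc.succ)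
  -- Replacing `f` by `f` minus its interpolant at the interior points changes no determinant.
  rw [← Phi_snoc_sub_sum ω f c] at htail hinit ⊢
  refine hω.Phi_snoc_removeNth_nonneg_of_eq_zero hz hzI (fun k hk0 hkl => ?_) htail hinit hj0 hjl
  obtain ⟨k, rfl⟩ := Fin.exists_succ_eq.2 hk0
  obtain ⟨k, rfl⟩ := Fin.exists_castSucc_eq.2 fun h => hkl (congrArg Fin.succ h)
  rw [hc, sub_self]

end Determinants

section Subgrids

variable {n : ℕ} {p : Fin (n + 1) → ℕ}

lemma eq_zero_add_of_strictMono_of_succ_le (hp : StrictMono p)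
    (hgap : ∀ i : Fin n, p i.succ ≤ p i.castSucc + 1) (j : Fin (n + 1)) : p j = p 0 + j := by
  induction j using Fin.induction with
  | zero => rfl
  | succ i ih =>
    rw [(hgap i).antisymm (hp Fin.castSucc_lt_succ), ih, Fin.val_succ, Fin.val_castSucc, add_assoc]

lemma exists_removeNth_eq_of_gap (hp : StrictMono p) {i : Fin n}
    (hgap : p i.castSucc + 1 < p i.succ) :
    ∃ (k : Fin (n + 2)) (z : Fin (n + 2) → ℕ), StrictMono z ∧ k.removeNth z = p ∧
      z 0 = p 0 ∧ z (Fin.last (n + 1)) = p (Fin.last n) := by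
  let k : Fin (n + 2) := i.castSucc.succ
  let z : Fin (n + 2) → ℕ := k.insertNth (p i.castSucc + 1) p
  have hz (l : Fin (n + 1)) : z (k.succAbove l) = p l := Fin.insertNth_apply_succAbove ..
  have hk0 : k ≠ 0 := Fin.succ_ne_zero _
  have hkl : k ≠ Fin.last (n + 1) := fun h => (Fin.castSucc_lt_last i).ne (Fin.succ_injective _ h)
  refine ⟨k, z, Fin.strictMono_insertNth hp i _ (Nat.lt_succ_self _) hgap, funext hz, ?_, ?_⟩
  · rw [← hz, Fin.succAbove_ne_zero_zero hk0]
  · rw [← hz, Fin.succAbove_ne_last_last hkl]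

lemma strictMono_tuple_induction {s : Set ℕ} (hs : s.OrdConnected)
    {P : (Fin (n + 1) → ℕ) → Prop}
    (consecutive : ∀ a, a ∈ s → a + n ∈ s → P fun j => a + j)
    (removeNth : ∀ z : Fin (n + 2) → ℕ, StrictMono z → (∀ j, z j ∈ s) →
      P (Fin.tail z) → P (Fin.init z) → ∀ j : Fin (n + 2), P (j.removeNth z))
    (hp : StrictMono p) (hps : ∀ j, p j ∈ s) : P p := by
  induction hd : p (Fin.last n) - p 0 using Nat.strong_induction_on generalizing p with
  | _ d ih =>
  by_cases hgap : ∀ i : Fin n, p i.succ ≤ p i.castSucc + 1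
  · have hform := eq_zero_add_of_strictMono_of_succ_le hp hgap
    rw [funext hform]
    exact consecutive _ (hps 0) (by simpa [hform (Fin.last n)] using hps (Fin.last n))
  -- Both end deletions of the tuple that fills a gap of `p` have a smaller spread than `p`.
  push Not at hgap
  obtain ⟨i, hi⟩ := hgap
  obtain ⟨k, z, hz, hzp, hz0, hzl⟩ := exists_removeNth_eq_of_gap hp hi
  have hzs (j : Fin (n + 2)) : z j ∈ s :=
    hs.out (hps 0) (hps (Fin.last n))
      ⟨hz0 ▸ hz.monotone (Fin.zero_le j), hzl ▸ hz.monotone (Fin.le_last j)⟩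
  have hlt : z 0 < z (Fin.last (n + 1)) := hz Fin.last_pos
  have htail : Fin.tail z (Fin.last n) - Fin.tail z 0 < d := by
    have hfirst : z 0 < Fin.tail z 0 := hz (Fin.succ_pos 0)
    have hlast : Fin.tail z (Fin.last n) = z (Fin.last (n + 1)) := rfl
    omega
  have hinit : Fin.init z (Fin.last n) - Fin.init z 0 < d := by
    have hlast : Fin.init z (Fin.last n) < z (Fin.last (n + 1)) := hz (Fin.castSucc_lt_last _)
    have hfirst : Fin.init z 0 = z 0 := rfl
    omega
  rw [← hzp]
  exact removeNth z hz hzs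
    (ih _ htail (hz.comp Fin.strictMono_succ) (fun _ => hzs _) rfl)
    (ih _ hinit (hz.comp Fin.strictMono_castSucc) (fun _ => hzs _) rfl) k

lemma IsPosChebyshev.Phi_snoc_comp_nonneg {ω : Fin n → ℝ → ℝ} {I : Set ℝ}
    (hω : IsPosChebyshev ω I) {f : ℝ → ℝ} {s : Set ℕ} (hs : s.OrdConnected)
    {y : ℕ → ℝ} (hy : StrictMonoOn y s) (hyI : Set.MapsTo y s I)
    (hf : ∀ a, a ∈ s → a + n ∈ s → 0 ≤ Phi (Fin.snoc ω f) fun j : Fin (n + 1) => y (a + j))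
    (hp : StrictMono p) (hps : ∀ j, p j ∈ s) :
    0 ≤ Phi (Fin.snoc ω f) (y ∘ p) :=
  strictMono_tuple_induction (P := fun p => 0 ≤ Phi (Fin.snoc ω f) (y ∘ p)) hs hf
    (fun z hz hzs htail hinit =>
      hω.Phi_snoc_removeNth_nonneg (z := y ∘ z) (fun _ _ h => hy (hzs _) (hzs _) (hz h))
        (fun j => hyI (hzs j)) htail hinit) hp hps

end Subgrids

section Convexity

variable {n : ℕ}

lemma psum_zero (t : Fin n → ℝ) : psum t 0 = 0 := by simp [psum]

lemma psum_succ (t : Fin n → ℝ) (i : Fin n) : psum t i.succ = psum t i.castSucc + t i := by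
  have hinsert : ({k | (k : ℕ) < (i.succ : ℕ)} : Finset (Fin n)) =
      insert i ({k | (k : ℕ) < (i.castSucc : ℕ)} : Finset (Fin n)) := by
    ext k
    simp [le_iff_eq_or_lt, Fin.ext_iff]
  unfold psum
  rw [hinsert, Finset.sum_insert (by simp), add_comm]

lemma eq_add_psum_mul {t : Fin n → ℝ} {h : ℝ} {y : Fin (n + 1) → ℝ}
    (hy : ∀ i : Fin n, y i.succ = y i.castSucc + t i * h) (j : Fin (n + 1)) :
    y j = y 0 + psum t j * h := by
  induction j using Fin.induction with
  | zero => rw [psum_zero]; ring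
  | succ i ih => rw [hy, ih, psum_succ]; ring

lemma tOmegaConvexOn_iff {ω : Fin n → ℝ → ℝ} {t : Fin n → ℝ} {J : Set ℝ} {f : ℝ → ℝ} :
    TOmegaConvexOn ω t J f ↔
      ∀ y : Fin (n + 1) → ℝ, ∀ h > 0, (∀ i : Fin n, y i.succ = y i.castSucc + t i * h) →
        y 0 ∈ J → y (Fin.last n) ∈ J → 0 ≤ Phi (Fin.snoc ω f) y := by
  constructor
  · intro hf y h hh hy h0 hlast
    have hyp := eq_add_psum_mul hy
    rw [funext hyp]
    exact hf _ h0 h hh (hyp (Fin.last n) ▸ hlast)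
  · intro hf x hx h hh hlast
    refine hf _ h hh (fun i => ?_) (by simpa [psum_zero] using hx) hlast
    rw [psum_succ]
    ring

end Convexity

section RefinedGrid

/-- The grid starting at `x` that makes `m` consecutive steps of length `τ 0 * h`, then `m` steps
of length `τ 1 * h`, and so on. Its points with index a multiple of `m` form the coarse grid, while
any `m + 1` consecutive steps of it involve only two consecutive values of `τ`. -/
noncomputable def refinedGrid (τ : ℕ → ℝ) (m : ℕ) (x h : ℝ) (p : ℕ) : ℝ :=
  x + ∑ q ∈ Finset.range p, τ (q / m) * h

variable {τ : ℕ → ℝ} {m : ℕ} {x h : ℝ}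

lemma refinedGrid_zero : refinedGrid τ m x h 0 = x := by
  simp [refinedGrid]

lemma refinedGrid_succ (p : ℕ) :
    refinedGrid τ m x h (p + 1) = refinedGrid τ m x h p + τ (p / m) * h := by
  rw [refinedGrid, Finset.sum_range_succ, ← add_assoc, refinedGrid]

lemma refinedGrid_strictMono (hτ : ∀ i, 0 < τ i) (hh : 0 < h) :
    StrictMono (refinedGrid τ m x h) :=
  strictMono_nat_of_lt_succ fun p => by
    rw [refinedGrid_succ]
    exact lt_add_of_pos_right _ (mul_pos (hτ _) hh)

lemma refinedGrid_mul_add {i r : ℕ} (hr : r ≤ m) :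
    refinedGrid τ m x h (m * i + r) = refinedGrid τ m x h (m * i) + r * (τ i * h) := by
  induction r with
  | zero => simp
  | succ r ih =>
    have hdiv : (m * i + r) / m = i := by
      rw [Nat.mul_add_div (by omega), Nat.div_eq_of_lt hr, add_zero]
    rw [← add_assoc, refinedGrid_succ, ih (by omega), hdiv]
    push_cast
    ring

lemma refinedGrid_mul (hm : m ≠ 0) {n : ℕ} {y : Fin (n + 1) → ℝ}
    (hy : ∀ i : Fin n, y i.succ = y i.castSucc + τ i * h) (j : Fin (n + 1)) :
    refinedGrid τ m (y 0) (h / m) (m * j) = y j := by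
  induction j using Fin.induction with
  | zero => exact refinedGrid_zero
  | succ i ih =>
    rw [Fin.val_castSucc] at ih
    rw [Fin.val_succ, mul_add_one, refinedGrid_mul_add le_rfl, ih, hy]
    field_simp

lemma add_div_eq_ite_of_le (hm : 0 < m) {s j : ℕ} (hj : j ≤ m) :
    (s + j) / m = if j < m - s % m then s / m else s / m + 1 := by
  have hr : s % m < m := Nat.mod_lt s hm
  have hsplit : s + j = m * (s / m) + (s % m + j) := by rw [← add_assoc, Nat.div_add_mod]
  rw [hsplit, Nat.mul_add_div hm]
  split_ifs
  · rw [Nat.div_eq_of_lt (by omega : s % m + j < m), add_zero]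
  · rw [Nat.div_eq_of_lt_le (by omega : 1 * m ≤ s % m + j) (by omega)]

lemma refinedGrid_window_nonneg (hm : 0 < m) (hh : 0 < h) {ω : Fin (m + 1) → ℝ → ℝ} {I : Set ℝ}
    {f : ℝ → ℝ} (hI : Set.MapsTo (refinedGrid τ m x h) (Set.Iic (m * (m + 1))) I)
    (hf : ∀ k i : ℕ, 1 ≤ k → k ≤ m → i < m →
      TOmegaConvexOn ω (fun j : Fin (m + 1) => if (j : ℕ) < k then τ i else τ (i + 1)) I f)
    {s : ℕ} (hs : s + (m + 1) ≤ m * (m + 1)) :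
    0 ≤ Phi (Fin.snoc ω f) fun j : Fin (m + 2) => refinedGrid τ m x h (s + j) := by
  have hdiv : s / m < m := Nat.div_lt_of_lt_mul (by grind)
  have hmod : s % m < m := Nat.mod_lt s hm
  refine tOmegaConvexOn_iff.1 (hf (m - s % m) (s / m) (by omega) (by omega) hdiv) _ h hh
    (fun i => ?_) (hI (le_of_add_le_left hs)) (hI hs)
  rw [Fin.val_succ, ← add_assoc, refinedGrid_succ, add_div_eq_ite_of_le hm (by omega),
    apply_ite τ, Fin.val_castSucc]

end RefinedGrid

/-- **Theorem 5⁺.** Let `n ≥ 2` and `(t₁,…,tₙ)` be positive. If, for every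
`k ∈ {1,…,n−1}` and every pair of subsequent coordinates `(t_i, t_{i+1})`
(`i ∈ {1,…,n−1}`, here `0`-based: `i+1 < n`), the function `f` is
`((t_i 𝟏_k, t_{i+1} 𝟏_{n−k}), ω)`-convex on `I`, then `f` is
`((t₁,…,tₙ), ω)`-convex on `I`. -/
theorem tOmegaConvex_of_twoBlock_convexities
    (n : ℕ) (hn : 2 ≤ n) (I : Set ℝ) (hI : I.OrdConnected)
    (hne : ∃ a ∈ I, ∃ b ∈ I, a < b)
    (ω : Fin n → ℝ → ℝ) (hω : IsPosChebyshev ω I)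
    (t : Fin n → ℝ) (ht : ∀ i, 0 < t i) (f : ℝ → ℝ)
    (hblocks : ∀ k i : ℕ, 1 ≤ k → k < n → ∀ hi : i + 1 < n,
      TOmegaConvexOn ω
        (fun j : Fin n => if (j : ℕ) < k then t ⟨i, by omega⟩ else t ⟨i + 1, hi⟩) I f) :
    TOmegaConvexOn ω t I f := by
  obtain ⟨m, rfl⟩ : ∃ m, n = m + 1 := ⟨n - 1, by omega⟩
  have hm : 0 < m := by omega
  obtain ⟨τ, hτpos, hτ⟩ : ∃ τ : ℕ → ℝ, (∀ i, 0 < τ i) ∧ ∀ i (hi : i < m + 1), τ i = t ⟨i, hi⟩ :=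
    ⟨fun i => t (Fin.ofNat (m + 1) i), fun _ => ht _,
      fun i hi => congrArg t (Fin.ext (Nat.mod_eq_of_lt hi))⟩
  refine tOmegaConvexOn_iff.2 fun y h hh hy hy0 hyl => ?_
  let g : ℕ → ℝ := refinedGrid τ m (y 0) (h / m)
  have hhm : 0 < h / m := by positivity
  have hg : StrictMono g := refinedGrid_strictMono hτpos hhm
  have hgy (j : Fin (m + 2)) : g (m * j) = y j :=
    refinedGrid_mul hm.ne' (fun i => (hy i).trans (by rw [hτ i i.2])) j
  have hgI : Set.MapsTo g (Set.Iic (m * (m + 1))) I := fun p hp =>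
    hI.out (hgy 0 ▸ hy0) (hgy (Fin.last _) ▸ hyl)
      ⟨hg.monotone (Nat.zero_le p), hg.monotone hp⟩
  have hwindow (s : ℕ) (_ : s ∈ Set.Iic (m * (m + 1)))
      (hs : s + (m + 1) ∈ Set.Iic (m * (m + 1))) :
      0 ≤ Phi (Fin.snoc ω f) fun j : Fin (m + 2) => g (s + j) := by
    refine refinedGrid_window_nonneg hm hhm hgI (fun k i hk hkm hi => ?_) hs
    rw [hτ i (by omega), hτ (i + 1) (by omega)]
    exact hblocks k i hk (by omega) (by omega)
  have hcoarse := hω.Phi_snoc_comp_nonneg Set.ordConnected_Iic (hg.strictMonoOn _) hgI hwindow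
    (p := fun j => m * j) (fun i j hij => Nat.mul_lt_mul_of_pos_left hij hm)
    fun j => Nat.mul_le_mul_left m (Nat.le_of_lt_succ j.2)
  rwa [show g ∘ _ = y from funext hgy] at hcoarse
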